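/- Fix any norm on V. Then: (i) for every M ≥ 0, the set {ρ ∈ Φ : ‖ρ‖ ≤ M} is finite; (ii) for every ε > 0, the set {ρ ∈ Φ⁺ : dist(ρ̂, Q̂) ≥ ε} is finite. -/

import Mathlib

open Filter Topology

noncomputable section

variable {ι V : Type*} [Fintype ι] [NormedAddCommGroup V] [NormedSpace ℝ V]

/-- The set of simple `B`-reflections: the linear automorphisms of `V` given by the
`B`-reflection formula `u ↦ u - 2 (B α u / B α α) • α` associated to a simple root `α ∈ Δ`. -/
def simpleReflections (B : LinearMap.BilinForm ℝ V) (Δ : Module.Basis ι ℝ V) :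
    Set (V ≃ₗ[ℝ] V) :=
  { e | ∃ i : ι, ∀ u : V, e u = u - (2 * B (Δ i) u / B (Δ i) (Δ i)) • Δ i }

/-- The geometric Coxeter group `W`: the subgroup of linear automorphisms of `V`
generated by the simple `B`-reflections. -/
def cox (B : LinearMap.BilinForm ℝ V) (Δ : Module.Basis ι ℝ V) : Subgroup (V ≃ₗ[ℝ] V) :=
  Subgroup.closure (simpleReflections B Δ)

/-- The root system `Φ = W ⬝ Δ`. -/
def Phi (B : LinearMap.BilinForm ℝ V) (Δ : Module.Basis ι ℝ V) : Set V :=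
  { ρ | ∃ w ∈ cox B Δ, ∃ i : ι, w (Δ i) = ρ }

/-- The positive roots `Φ⁺ = Φ ∩ cone(Δ)`. -/
def posPhi (B : LinearMap.BilinForm ℝ V) (Δ : Module.Basis ι ℝ V) : Set V :=
  { ρ ∈ Phi B Δ | ∀ i : ι, 0 ≤ Δ.repr ρ i }

/-- `|v|₁`: the sum of the coordinates of `v` in the basis `Δ`. -/
def l1 (Δ : Module.Basis ι ℝ V) (v : V) : ℝ := ∑ i : ι, Δ.repr v i

/-- The normalization map `v ↦ v̂ = v / |v|₁`. -/
def nrm (Δ : Module.Basis ι ℝ V) (v : V) : V := (l1 Δ v)⁻¹ • v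

/-- The set `Φ̂` of normalized roots. -/
def nPhi (B : LinearMap.BilinForm ℝ V) (Δ : Module.Basis ι ℝ V) : Set V :=
  nrm Δ '' posPhi B Δ

/-- `E(Φ)`: the set of accumulation points of the set of normalized roots. -/
def Eset (B : LinearMap.BilinForm ℝ V) (Δ : Module.Basis ι ℝ V) : Set V :=
  { x | AccPt x (𝓟 (nPhi B Δ)) }

/-- The isotropic cone `Q` of `B`. -/
def isoQ (B : LinearMap.BilinForm ℝ V) : Set V := { v | B v v = 0 }

/-!
Tits' theorem says that in the geometric representation of a Coxeter group `W`, an element `w` with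
`ℓ (w s) > ℓ w` maps the simple root of `s` into the cone of the simple roots. Splitting off from
`w` an alternating word of length `k` in `s` and a second generator `t` reduces this, by induction
on the length, to the dihedral group of `s` and `t`, where the coefficients are values of Chebyshev
polynomials such as `U_k (cos (π / m)) = sin ((k + 1) π / m) / sin (π / m)`, which is nonnegative
for `k < m`.

An element close to the identity keeps the diagonal coordinates of all simple roots positive, so it
is the identity: `W` is discrete. If two roots `x`, `y` are close to each other, the product of
their reflections is close to the identity, hence equal to it, and so `x = y`. Thus `Φ` has no
accumulation point in `V`, and (i) follows by compactness of the balls of the given norm.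

For (ii), `B ρ ρ = 1` gives `B ρ̂ ρ̂ = |ρ|₁⁻²`. The normalized positive roots lie in the compact
simplex spanned by `Δ`, on which `|B v v|` is bounded below away from `Q̂`. Therefore `|ρ|₁`, and
with it the norm of `ρ`, is bounded, and (i) applies.
-/

section Chebyshev

open Polynomial.Chebyshev

theorem eval_chebyshevU_nonneg_of_one_le {x : ℝ} (hx : 1 ≤ x) (n : ℕ) :
    0 ≤ (U ℝ n).eval x := by
  suffices h : 0 ≤ (U ℝ n).eval x ∧ (U ℝ n).eval x ≤ (U ℝ (n + 1)).eval x from h.1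
  induction n with
  | zero =>
    simp only [Nat.cast_zero, zero_add, U_zero, U_one, Polynomial.eval_one, Polynomial.eval_mul,
      Polynomial.eval_ofNat, Polynomial.eval_X]
    exact ⟨zero_le_one, by linarith⟩
  | succ n ih =>
    obtain ⟨hn, hmono⟩ := ih
    push_cast
    refine ⟨hn.trans hmono, ?_⟩
    rw [U_add_one ℝ (n + 1 : ℤ)]
    simp only [add_sub_cancel_right, Polynomial.eval_sub, Polynomial.eval_mul,
      Polynomial.eval_ofNat, Polynomial.eval_X]
    nlinarith

theorem sin_pi_div_natCast_pos {m : ℕ} (hm : 2 ≤ m) : 0 < Real.sin (Real.pi / m) := by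
  have hm' : (1 : ℝ) < m := by exact_mod_cast hm
  exact Real.sin_pos_of_pos_of_lt_pi (by positivity) (div_lt_self Real.pi_pos hm')

theorem eval_chebyshevU_cos_pi_div_nonneg {m n : ℕ} (hn : n < m) :
    0 ≤ (U ℝ n).eval (Real.cos (Real.pi / m)) := by
  obtain hm | rfl | rfl : 2 ≤ m ∨ m = 1 ∨ m = 0 := by lia
  · refine nonneg_of_mul_nonneg_left ?_ (sin_pi_div_natCast_pos hm)
    rw [U_real_cos]
    have hm' : (n : ℝ) + 1 ≤ m := by exact_mod_cast hn
    refine Real.sin_nonneg_of_nonneg_of_le_pi (by positivity) ?_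
    calc ((n : ℤ) + 1 : ℝ) * (Real.pi / m) ≤ m * (Real.pi / m) := by
          push_cast; gcongr
      _ = Real.pi := by field_simp
  · simp [Nat.lt_one_iff.mp hn]
  · lia

theorem eval_chebyshevS_two_mul_cos (n : ℤ) (θ : ℝ) :
    (S ℝ n).eval (2 * Real.cos θ) * Real.sin θ = Real.sin ((n + 1) * θ) := by
  rw [← U_real_cos, ← S_comp_two_mul_X]
  simp

end Chebyshev

section Reflections

open Module Polynomial.Chebyshev

variable {E : Type*} [AddCommGroup E] [Module ℝ E] {x y : E} {f g : Dual ℝ E}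

theorem reflection_mul_reflection_pow_eq_one (hf : f x = 2) (hg : g y = 2) {m : ℕ} (hm : 3 ≤ m)
    (hfg : f y * g x = 4 * Real.cos (Real.pi / m) ^ 2) :
    (reflection hf * reflection hg) ^ m = 1 := by
  set φ : ℝ := 2 * (Real.pi / m) with hφ
  have ht : 2 * Real.cos φ = f y * g x - 2 := by
    rw [hfg, hφ, Real.cos_two_mul]; ring
  have hm' : (2 : ℝ) < m := by exact_mod_cast hm
  have hmφ : m * φ = 2 * Real.pi := by rw [hφ]; field_simp
  have hsin : Real.sin φ ≠ 0 :=
    (Real.sin_pos_of_pos_of_lt_pi (by positivity) (by nlinarith [Real.pi_pos])).ne'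
  ext z
  rw [reflection_mul_reflection_pow_apply hf hg m z _ ht]
  obtain ⟨k, rfl | rfl⟩ := m.even_or_odd'
  · have hS : (S ℝ (k - 1)).eval (2 * Real.cos φ) = 0 := by
      refine (mul_eq_zero_iff_right hsin).mp ?_
      rw [eval_chebyshevS_two_mul_cos]
      have : ((k - 1 : ℤ) + 1) * φ = Real.pi := by push_cast at hmφ ⊢; linarith
      rw [this, Real.sin_pi]
    have h₁ : ((2 * k : ℕ) - 2 : ℤ) / 2 = k - 1 := by lia
    have h₂ : ((2 * k : ℕ) - 1 : ℤ) / 2 = k - 1 := by lia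
    simp only [h₁, h₂, hS, zero_mul, zero_smul, add_zero]
    rfl
  · have hS : (S ℝ k).eval (2 * Real.cos φ) + (S ℝ (k - 1)).eval (2 * Real.cos φ) = 0 := by
      refine (mul_eq_zero_iff_right hsin).mp ?_
      rw [add_mul, eval_chebyshevS_two_mul_cos, eval_chebyshevS_two_mul_cos]
      have : ((k : ℤ) + 1) * φ = 2 * Real.pi - ((k - 1 : ℤ) + 1) * φ := by
        push_cast at hmφ ⊢; linarith
      rw [this, Real.sin_two_pi_sub, neg_add_cancel]
    have h₁ : ((2 * k + 1 : ℕ) - 2 : ℤ) / 2 = k - 1 := by lia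
    have h₂ : ((2 * k + 1 : ℕ) - 1 : ℤ) / 2 = k := by lia
    have h₃ : ((2 * k + 1 : ℕ) - 3 : ℤ) / 2 = k - 1 := by lia
    have h₄ : ((2 * k + 1 : ℕ) : ℤ) / 2 = k := by lia
    simp only [h₁, h₂, h₃, h₄, hS, zero_smul, add_zero, mul_zero]
    rfl

theorem reflection_mul_reflection_sq_eq_one {R F : Type*} [CommRing R] [AddCommGroup F]
    [Module R F] {x y : F} {f g : Dual R F} (hf : f x = 2) (hg : g y = 2)
    (hfy : f y = 0) (hgx : g x = 0) : (reflection hf * reflection hg) ^ 2 = 1 := by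
  ext z
  simp only [pow_two, LinearEquiv.mul_apply, reflection_apply, map_sub, map_smul, hf, hg, hfy, hgx,
    LinearEquiv.coe_one, id]
  module

end Reflections

section CoxeterGroup

open CoxeterSystem

variable {I W : Type*} [Group W] {M : CoxeterMatrix I} (cs : CoxeterSystem M W)

theorem exists_eq_mul_wordProd_alternatingWord (w : W) {s : I} (t : I)
    (hs : ¬cs.IsRightDescent w s) :
    ∃ (v : W) (k : ℕ), w = v * cs.wordProd (alternatingWord s t k) ∧
      cs.length w = cs.length v + k ∧ ¬cs.IsRightDescent v s ∧ ¬cs.IsRightDescent v t := by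
  induction hn : cs.length w generalizing w s t with
  | zero =>
    obtain rfl := cs.length_eq_zero_iff.mp hn
    exact ⟨1, 0, by simp [alternatingWord], by simp, hs, cs.not_isRightDescent_one t⟩
  | succ n ih =>
    by_cases ht : cs.IsRightDescent w t
    · have hwt : cs.length (w * cs.simple t) = n := by
        rw [cs.isRightDescent_iff, hn] at ht
        lia
      obtain ⟨v, k, hv, hlen, hvt, hvs⟩ :=
        ih _ s (cs.isRightDescent_iff_not_isRightDescent_mul.mp ht) hwt
      refine ⟨v, k + 1, ?_, by lia, hvs, hvt⟩
      rw [alternatingWord_succ, cs.wordProd_concat, ← mul_assoc, ← hv,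
        cs.simple_mul_simple_cancel_right]
    · exact ⟨w, 0, by simp [alternatingWord], by simp [hn], hs, ht⟩

theorem lt_of_not_isRightDescent_mul_wordProd_alternatingWord {v : W} {s t : I} {k : ℕ}
    (hM : M s t ≠ 0)
    (hlen : cs.length (v * cs.wordProd (alternatingWord s t k)) = cs.length v + k)
    (hs : ¬cs.IsRightDescent (v * cs.wordProd (alternatingWord s t k)) s) : k < M s t := by
  by_contra! hk
  rw [M.symmetric] at hM hk
  refine cs.not_isReduced_alternatingWord t s hM (Nat.lt_succ_of_le hk) ?_
  refine le_antisymm (cs.length_wordProd_le _) ?_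
  rw [cs.not_isRightDescent_iff, mul_assoc, ← cs.wordProd_concat, ← alternatingWord_succ,
    hlen] at hs
  have := cs.length_mul_le v (cs.wordProd (alternatingWord t s (k + 1)))
  rw [length_alternatingWord]
  lia

end CoxeterGroup

section CoxeterForm

open CoxeterSystem Polynomial.Chebyshev

variable {I E W : Type*} [AddCommGroup E] [Module ℝ E] [Group W]

/-- The Coxeter exponent `m` attached to the value `x = B α β` of the form on two simple roots:
`x = -cos (π / m)` when possible. The value `0` encodes `m = ∞`, and it is taken at every `x < -1`
because `sInf ∅ = 0`, as well as at `x = -1` because `π / 0 = 0`. -/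
def coxeterExponent (x : ℝ) : ℕ := sInf {m : ℕ | x = -Real.cos (Real.pi / m)}

theorem eq_neg_cos_pi_div_coxeterExponent {x : ℝ} {m : ℕ} (hx : x = -Real.cos (Real.pi / m)) :
    x = -Real.cos (Real.pi / coxeterExponent x) :=
  Nat.sInf_mem (s := {m : ℕ | x = -Real.cos (Real.pi / m)}) ⟨m, hx⟩

theorem eq_neg_cos_of_coxeterExponent_ne_zero {x : ℝ} (hx : coxeterExponent x ≠ 0) :
    x = -Real.cos (Real.pi / coxeterExponent x) :=
  Nat.sInf_mem (Nat.nonempty_of_pos_sInf hx.bot_lt)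

theorem coxeterExponent_eq_one_iff {x : ℝ} : coxeterExponent x = 1 ↔ x = 1 := by
  refine ⟨fun h ↦ ?_, ?_⟩
  · simpa [h] using eq_neg_cos_of_coxeterExponent_ne_zero (x := x) (by simp [h])
  · rintro rfl
    have hone : (1 : ℝ) = -Real.cos (Real.pi / (1 : ℕ)) := by simp
    refine le_antisymm (Nat.sInf_le hone) (Nat.one_le_iff_ne_zero.mpr fun h ↦ ?_)
    have := eq_neg_cos_pi_div_coxeterExponent hone
    norm_num [h] at this

theorem neg_cos_pi_div_nonpos {m : ℕ} (hm : 2 ≤ m) : -Real.cos (Real.pi / m) ≤ 0 := by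
  have hm' : (2 : ℝ) ≤ m := by exact_mod_cast hm
  refine neg_nonpos.mpr (Real.cos_nonneg_of_neg_pi_div_two_le_of_le ?_ ?_)
  · linarith [show 0 ≤ Real.pi / m by positivity, Real.pi_pos]
  · exact div_le_div_of_nonneg_left Real.pi_pos.le two_pos hm'

/-- `B` takes on the family `α` of simple roots the values prescribed by the Coxeter matrix `M`;
when `M i j = 0`, which stands for `∞`, any value at most `-1` is allowed. -/
structure IsCoxeterForm (M : CoxeterMatrix I) (B : LinearMap.BilinForm ℝ E) (α : I → E) :
    Prop where
  isSymm : B.IsSymm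
  apply_of_ne_zero : ∀ i j, M i j ≠ 0 → B (α i) (α j) = -Real.cos (Real.pi / M i j)
  apply_of_eq_zero : ∀ i j, M i j = 0 → B (α i) (α j) ≤ -1

theorem exists_isCoxeterForm {B : LinearMap.BilinForm ℝ E} {α : I → E} (hsymm : B.IsSymm)
    (hdiag : ∀ i, B (α i) (α i) = 1)
    (hoff : ∀ i j, i ≠ j → B (α i) (α j) ≤ -1 ∨
      ∃ k : ℕ, 2 ≤ k ∧ B (α i) (α j) = -Real.cos (Real.pi / k)) :
    ∃ M : CoxeterMatrix I, IsCoxeterForm M B α := by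
  have hnonpos : ∀ i j, i ≠ j → B (α i) (α j) ≤ 0 := fun i j hij ↦ by
    rcases hoff i j hij with h | ⟨k, hk, h⟩
    · linarith
    · exact h.trans_le (neg_cos_pi_div_nonpos hk)
  let M : CoxeterMatrix I :=
    { M := fun i j ↦ coxeterExponent (B (α i) (α j))
      isSymm := Matrix.IsSymm.ext fun i j ↦ by rw [hsymm.eq]
      diagonal := fun i ↦ coxeterExponent_eq_one_iff.mpr (hdiag i)
      off_diagonal := fun i j hij h ↦ by
        linarith [hnonpos i j hij, coxeterExponent_eq_one_iff.mp h] }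
  refine ⟨M, hsymm, fun i j ↦ eq_neg_cos_of_coxeterExponent_ne_zero, fun i j hM ↦ ?_⟩
  have hij : i ≠ j := by
    rintro rfl
    simp at hM
  rcases hoff i j hij with h | ⟨k, -, h⟩
  · exact h
  · have hB := eq_neg_cos_pi_div_coxeterExponent h
    rw [show coxeterExponent (B (α i) (α j)) = 0 from hM] at hB
    simpa using hB.le

/-- The `B`-reflection `u ↦ u - 2 B(x, u) x` in a vector `x` normalized by `B x x = 1`; for other
`x` it need not be a reflection. -/
def formReflection (B : LinearMap.BilinForm ℝ E) (x : E) : Module.End ℝ E :=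
  Module.preReflection x ((2 : ℝ) • B x)

theorem formReflection_apply (B : LinearMap.BilinForm ℝ E) (x u : E) :
    formReflection B x u = u - (2 * B x u) • x :=
  rfl

theorem formReflection_formReflection_self {B : LinearMap.BilinForm ℝ E} {x : E} (hx : B x x = 1)
    (u : E) : formReflection B x (formReflection B x u) = u :=
  Module.involutive_preReflection (by simp [hx]) u

namespace IsCoxeterForm

variable {M : CoxeterMatrix I} {B : LinearMap.BilinForm ℝ E} {α : I → E}
  (h : IsCoxeterForm M B α) (cs : CoxeterSystem M W)

include h

theorem apply_self (i : I) : B (α i) (α i) = 1 := by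
  simp [h.apply_of_ne_zero i i (by simp)]

theorem two_smul_apply_self (i : I) : ((2 : ℝ) • B (α i)) (α i) = 2 := by
  simp [h.apply_self]

theorem isLiftable_reflection :
    M.IsLiftable fun i ↦ Module.reflection (h.two_smul_apply_self i) := by
  intro i j
  obtain hM | hM | hM | hM : M i j = 0 ∨ M i j = 1 ∨ M i j = 2 ∨ 3 ≤ M i j := by lia
  · rw [hM, pow_zero]
  · obtain rfl : i = j := not_imp_not.mp (M.off_diagonal i j) hM
    rw [hM, pow_one, ← eq_inv_iff_mul_eq_one, Module.reflection_inv]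
  · have hB : B (α i) (α j) = 0 := by simp [h.apply_of_ne_zero i j (by simp [hM]), hM]
    rw [hM]
    exact reflection_mul_reflection_sq_eq_one _ _ (by simp [hB]) (by simp [h.isSymm.eq, hB])
  · refine reflection_mul_reflection_pow_eq_one _ _ hM ?_
    rw [LinearMap.smul_apply, LinearMap.smul_apply, h.isSymm.eq (α j) (α i),
      h.apply_of_ne_zero i j (by lia), smul_eq_mul]
    ring

/-- The geometric representation of the Coxeter group `W`, in which the `i`-th simple reflection
acts as the `B`-reflection in `α i`. -/
def rep : W →* (E ≃ₗ[ℝ] E) := cs.lift ⟨_, h.isLiftable_reflection⟩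

theorem rep_simple (i : I) :
    h.rep cs (cs.simple i) = Module.reflection (h.two_smul_apply_self i) :=
  cs.lift_apply_simple h.isLiftable_reflection i

theorem rep_simple_apply (i : I) (u : E) :
    h.rep cs (cs.simple i) u = formReflection B (α i) u := by
  rw [rep_simple]
  rfl

theorem apply_rep_rep (w : W) (u v : E) : B (h.rep cs w u) (h.rep cs w v) = B u v := by
  induction w using cs.simple_induction_left generalizing u v with
  | one => simp
  | mul_simple_left w i ih =>
    rw [map_mul, LinearEquiv.mul_apply, LinearEquiv.mul_apply, rep_simple_apply, rep_simple_apply,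
      formReflection_apply, formReflection_apply, ← ih u v]
    simp only [map_sub, map_smul, LinearMap.sub_apply, LinearMap.smul_apply, smul_eq_mul,
      h.apply_self, h.isSymm.eq _ (α i)]
    ring

theorem rep_conj_simple_apply (w : W) (i : I) (u : E) :
    h.rep cs (w * cs.simple i * w⁻¹) u = formReflection B (h.rep cs w (α i)) u := by
  have hB := h.apply_rep_rep cs w (α i) (h.rep cs w⁻¹ u)
  have hu : h.rep cs w (h.rep cs w⁻¹ u) = u := by
    rw [← LinearEquiv.mul_apply, ← map_mul, mul_inv_cancel, map_one, LinearEquiv.coe_one, id]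
  rw [hu] at hB
  rw [map_mul, map_mul, LinearEquiv.mul_apply, LinearEquiv.mul_apply, rep_simple_apply,
    formReflection_apply, formReflection_apply, map_sub, map_smul, hu, hB]

theorem rep_wordProd_alternatingWord_apply (s t : I) (k : ℕ) :
    h.rep cs (cs.wordProd (alternatingWord s t k)) (α s) =
      (U ℝ k).eval (-B (α s) (α t)) • α (if Even k then s else t) +
        (U ℝ (k - 1)).eval (-B (α s) (α t)) • α (if Even k then t else s) := by
  induction k with
  | zero => simp [alternatingWord]
  | succ k ih =>
    rw [alternatingWord_succ', cs.wordProd_cons, map_mul, LinearEquiv.mul_apply, ih,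
      rep_simple_apply, formReflection_apply]
    push_cast
    rw [add_sub_cancel_right, U_add_one]
    by_cases hk : Even k <;>
    · simp only [hk, Nat.even_add_one, not_true, not_false_iff, if_true, if_false, map_add,
        map_smul, h.apply_self, h.isSymm.eq (α t) (α s), Polynomial.eval_sub, Polynomial.eval_mul,
        Polynomial.eval_ofNat, Polynomial.eval_X, smul_eq_mul]
      module

theorem eval_chebyshevU_nonneg {s t : I} {k : ℕ} (hk : M s t ≠ 0 → k < M s t) :
    0 ≤ (U ℝ k).eval (-B (α s) (α t)) := by
  by_cases hM : M s t = 0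
  · exact eval_chebyshevU_nonneg_of_one_le (by linarith [h.apply_of_eq_zero s t hM]) k
  · rw [h.apply_of_ne_zero s t hM, neg_neg]
    exact eval_chebyshevU_cos_pi_div_nonneg (hk hM)

theorem rep_apply_mem_hull_of_not_isRightDescent {w : W} {s : I}
    (hs : ¬cs.IsRightDescent w s) : h.rep cs w (α s) ∈ PointedCone.hull ℝ (Set.range α) := by
  induction hn : cs.length w using Nat.strong_induction_on generalizing w s with | _ n ih
  by_cases hw : w = 1
  · simpa [hw] using PointedCone.subset_hull (Set.mem_range_self s)
  obtain ⟨t, ht⟩ := cs.exists_rightDescent_of_ne_one hw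
  obtain ⟨v, k, rfl, hlen, hvs, hvt⟩ := exists_eq_mul_wordProd_alternatingWord cs w t hs
  obtain ⟨k, rfl⟩ : ∃ j, k = j + 1 := Nat.exists_eq_succ_of_ne_zero <| by
    rintro rfl
    simp [alternatingWord, hvt] at ht
  have hk : M s t ≠ 0 → k + 1 < M s t := fun hM ↦
    lt_of_not_isRightDescent_mul_wordProd_alternatingWord cs hM hlen hs
  have hU := h.eval_chebyshevU_nonneg hk
  have hU' := h.eval_chebyshevU_nonneg fun hM ↦ (Nat.lt_succ_self k).trans (hk hM)
  have hvs' := ih _ (by lia) hvs rfl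
  have hvt' := ih _ (by lia) hvt rfl
  rw [map_mul, LinearEquiv.mul_apply, h.rep_wordProd_alternatingWord_apply]
  simp only [map_add, map_smul, Nat.cast_succ, add_sub_cancel_right]
  split_ifs
  · exact add_mem (Submodule.smul_mem _ ⟨_, hU⟩ hvs') (Submodule.smul_mem _ ⟨_, hU'⟩ hvt')
  · exact add_mem (Submodule.smul_mem _ ⟨_, hU⟩ hvt') (Submodule.smul_mem _ ⟨_, hU'⟩ hvs')

theorem exists_neg_rep_apply_mem_hull {w : W} (hw : w ≠ 1) :
    ∃ i, -h.rep cs w (α i) ∈ PointedCone.hull ℝ (Set.range α) := by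
  obtain ⟨i, hi⟩ := cs.exists_rightDescent_of_ne_one hw
  have := h.rep_apply_mem_hull_of_not_isRightDescent cs
    (cs.isRightDescent_iff_not_isRightDescent_mul.mp hi)
  have hneg : h.rep cs (w * cs.simple i) (α i) = -h.rep cs w (α i) := by
    rw [map_mul, LinearEquiv.mul_apply, rep_simple_apply, formReflection_apply,
      h.apply_self, mul_one, two_smul, sub_add_cancel_left, map_neg]
  exact ⟨i, hneg ▸ this⟩

end IsCoxeterForm

theorem repr_nonneg_of_mem_hull {b : Module.Basis I ℝ E} {x : E}
    (hx : x ∈ PointedCone.hull ℝ (Set.range b)) (i : I) : 0 ≤ b.repr x i := by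
  induction hx using Submodule.span_induction with
  | mem x hx =>
    obtain ⟨j, rfl⟩ := hx
    rw [b.repr_self]
    exact Finsupp.single_nonneg.mpr zero_le_one i
  | zero => simp
  | add x y _ _ hx hy => simpa using add_nonneg hx hy
  | smul c x _ hx =>
    change 0 ≤ b.repr ((c : ℝ) • x) i
    simpa only [map_smul, Finsupp.smul_apply] using smul_nonneg c.2 hx

theorem IsCoxeterForm.eq_one_of_repr_rep_apply_pos {M : CoxeterMatrix I}
    {B : LinearMap.BilinForm ℝ E} {b : Module.Basis I ℝ E} (h : IsCoxeterForm M B b)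
    (cs : CoxeterSystem M W) {w : W}
    (hpos : ∀ i, 0 < b.repr (h.rep cs w (b i)) i) : w = 1 := by
  by_contra hw
  obtain ⟨i, hi⟩ := h.exists_neg_rep_apply_mem_hull cs hw
  have hnonneg := repr_nonneg_of_mem_hull hi i
  rw [map_neg, Finsupp.neg_apply] at hnonneg
  linarith [hpos i]

end CoxeterForm

section FiniteDimensional

variable {E : Type*} [NormedAddCommGroup E] [NormedSpace ℝ E] [FiniteDimensional ℝ E]

theorem continuous_bilinForm_apply (B : LinearMap.BilinForm ℝ E) :
    Continuous fun p : E × E ↦ B p.1 p.2 :=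
  B.toContinuousBilinearMap.continuous₂

theorem continuous_formReflection_apply (B : LinearMap.BilinForm ℝ E) :
    Continuous fun p : E × E ↦ formReflection B p.1 p.2 := by
  have hB := continuous_bilinForm_apply B
  simp only [formReflection_apply]
  fun_prop

theorem continuous_seminorm (N : Seminorm ℝ E) : Continuous N :=
  continuousOn_univ.mp (N.convexOn.continuousOn isOpen_univ)

theorem exists_pos_forall_mul_norm_le_seminorm {N : Seminorm ℝ E} (hN : ∀ v, N v = 0 → v = 0) :
    ∃ c > 0, ∀ v, c * ‖v‖ ≤ N v := by
  obtain ⟨c, hc, hcN⟩ : ∃ c > 0, ∀ v ∈ Metric.sphere (0 : E) 1, c ≤ N v := by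
    refine (isCompact_sphere 0 1).exists_forall_le' (continuous_seminorm N).continuousOn
      fun v hv ↦ (apply_nonneg N v).lt_of_ne' fun h₀ ↦ ?_
    exact Metric.ne_of_mem_sphere hv one_ne_zero (hN v h₀)
  refine ⟨c, hc, fun v ↦ ?_⟩
  rcases eq_or_ne v 0 with rfl | hv
  · simp
  · have hnorm : 0 < ‖v‖ := norm_pos_iff.mpr hv
    have hunit := hcN (‖v‖⁻¹ • v) (by simp [norm_smul, hnorm.ne'])
    rwa [map_smul_eq_mul, norm_inv, norm_norm, ← div_eq_inv_mul, le_div_iff₀ hnorm] at hunit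

theorem isCompact_setOf_seminorm_le {N : Seminorm ℝ E} (hN : ∀ v, N v = 0 → v = 0) (r : ℝ) :
    IsCompact {v | N v ≤ r} := by
  obtain ⟨c, hc, hcN⟩ := exists_pos_forall_mul_norm_le_seminorm hN
  refine Metric.isCompact_of_isClosed_isBounded
    (isClosed_le (continuous_seminorm N) continuous_const) ?_
  refine isBounded_iff_forall_norm_le.mpr ⟨r / c, fun v hv ↦ ?_⟩
  rw [le_div_iff₀' hc]
  exact (hcN v).trans hv

end FiniteDimensional

section Roots

open CoxeterSystem

variable {I E W : Type*} [NormedAddCommGroup E] [NormedSpace ℝ E] [Group W]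
  {B : LinearMap.BilinForm ℝ E} {Δ : Module.Basis I ℝ E} {M : CoxeterMatrix I}
  (h : IsCoxeterForm M B Δ) (cs : CoxeterSystem M W)

namespace IsCoxeterForm

include h

theorem cox_eq_range_rep : cox B Δ = (h.rep cs).range := by
  have hsimple : simpleReflections B Δ = h.rep cs '' Set.range cs.simple := by
    rw [← Set.range_comp]
    ext e
    refine exists_congr fun i ↦ ?_
    simp only [h.apply_self, div_one, LinearEquiv.ext_iff, Function.comp_apply, rep_simple_apply,
      formReflection_apply]
    exact forall_congr' fun u ↦ eq_comm
  rw [cox, hsimple, ← MonoidHom.map_closure, cs.subgroup_closure_range_simple,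
    MonoidHom.range_eq_map]

theorem mem_Phi_iff {ρ : E} : ρ ∈ Phi B Δ ↔ ∃ w i, h.rep cs w (Δ i) = ρ := by
  simp [Phi, h.cox_eq_range_rep cs]

theorem apply_self_of_mem_Phi {ρ : E} (hρ : ρ ∈ Phi B Δ) : B ρ ρ = 1 := by
  obtain ⟨w, i, rfl⟩ := (h.mem_Phi_iff M.toCoxeterSystem).mp hρ
  rw [h.apply_rep_rep, h.apply_self]

theorem exists_rep_apply_eq_formReflection {ρ : E} (hρ : ρ ∈ Phi B Δ) :
    ∃ w, ∀ u, h.rep cs w u = formReflection B ρ u := by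
  obtain ⟨w, i, rfl⟩ := (h.mem_Phi_iff cs).mp hρ
  exact ⟨w * cs.simple i * w⁻¹, h.rep_conj_simple_apply cs w i⟩

theorem eq_of_repr_formReflection_formReflection_pos {x y : E} (hx : x ∈ Phi B Δ)
    (hy : y ∈ Phi B Δ) (hxy : 0 < B x y)
    (hpos : ∀ i, 0 < Δ.repr (formReflection B x (formReflection B y (Δ i))) i) : x = y := by
  obtain ⟨v, hv⟩ := h.exists_rep_apply_eq_formReflection M.toCoxeterSystem hx
  obtain ⟨w, hw⟩ := h.exists_rep_apply_eq_formReflection M.toCoxeterSystem hy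
  have hvw (u : E) :
      h.rep M.toCoxeterSystem (v * w) u = formReflection B x (formReflection B y u) := by
    rw [map_mul, LinearEquiv.mul_apply, hw, hv]
  have hone : v * w = 1 :=
    h.eq_one_of_repr_rep_apply_pos M.toCoxeterSystem (b := Δ) fun i ↦ (hvw (Δ i)).symm ▸ hpos i
  have hmul : B x y • x = y := by
    have hfix := hvw y
    rw [hone, map_one, LinearEquiv.coe_one, id, formReflection_apply, formReflection_apply,
      h.apply_self_of_mem_Phi hy, map_sub, map_smul, smul_eq_mul] at hfix
    linear_combination (norm := module) (-1 / 2 : ℝ) • hfix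
  have hsq : B x y * B x y = 1 := by
    have hself := h.apply_self_of_mem_Phi hy
    nth_rw 2 [← hmul] at hself
    rwa [map_smul, smul_eq_mul, h.isSymm.eq y x] at hself
  rw [← hmul, (mul_self_eq_one_iff.mp hsq).resolve_right (by linarith), one_smul]

theorem not_accPt_Phi [Finite I] (x : E) : ¬AccPt x (𝓟 (Phi B Δ)) := by
  have := Δ.finiteDimensional_of_finite
  have hB := continuous_bilinForm_apply B
  have hcont (i : I) : Continuous fun p : E × E ↦
      Δ.coord i (formReflection B p.1 (formReflection B p.2 (Δ i))) :=
    (LinearMap.continuous_of_finiteDimensional (Δ.coord i)).comp <|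
      (continuous_formReflection_apply B).comp <| continuous_fst.prodMk <|
        (continuous_formReflection_apply B).comp <| continuous_snd.prodMk continuous_const
  intro hacc
  have hx : B x x = 1 := by
    by_contra hx
    have hne : ∀ᶠ y in 𝓝 x, B y y ≠ 1 :=
      (hB.comp (continuous_id.prodMk continuous_id)).continuousAt.eventually_ne hx
    obtain ⟨y, ⟨hy, hyΦ⟩, -⟩ := accPt_iff_nhds.mp hacc _ hne
    exact hy (h.apply_self_of_mem_Phi hyΦ)
  have hpos : ∀ᶠ p in 𝓝 (x, x), 0 < B p.1 p.2 ∧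
      ∀ i, 0 < Δ.coord i (formReflection B p.1 (formReflection B p.2 (Δ i))) := by
    refine (hB.continuousAt.eventually_const_lt (by simp [hx])).and (eventually_all.mpr fun i ↦ ?_)
    exact (hcont i).continuousAt.eventually_const_lt
      (by simp [formReflection_formReflection_self hx])
  rw [nhds_prod_eq, eventually_prod_self_iff'] at hpos
  obtain ⟨U, hU, hUpos⟩ := hpos
  have hsub : (U ∩ Phi B Δ).Subsingleton := fun y hy z hz ↦
    have hyz := hUpos y hy.1 z hz.1
    h.eq_of_repr_formReflection_formReflection_pos hy.2 hz.2 hyz.1 hyz.2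
  exact (Set.Infinite.of_accPt (hacc.nhds_inter hU)) hsub.finite

theorem finite_setOf_mem_Phi_seminorm_le [Finite I] {N : Seminorm ℝ E}
    (hN : ∀ v, N v = 0 → v = 0) (r : ℝ) : {ρ ∈ Phi B Δ | N ρ ≤ r}.Finite := by
  have := Δ.finiteDimensional_of_finite
  by_contra hinf
  obtain ⟨x, -, hx⟩ := Set.Infinite.exists_accPt_of_subset_isCompact hinf
    (isCompact_setOf_seminorm_le hN r) fun ρ hρ ↦ hρ.2
  exact h.not_accPt_Phi x (hx.mono (principal_mono.mpr fun ρ hρ ↦ hρ.1))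

end IsCoxeterForm

end Roots

section NormalizedRoots

variable {I E : Type*} [Fintype I] [NormedAddCommGroup E] [NormedSpace ℝ E]
  {B : LinearMap.BilinForm ℝ E} {Δ : Module.Basis I ℝ E}

/-- The slice of `cone Δ` by the affine hyperplane `V₁`: the simplex spanned by the simple roots,
which contains every normalized positive root. -/
def simpleRootSimplex (Δ : Module.Basis I ℝ E) : Set E := Δ.equivFunL ⁻¹' stdSimplex ℝ I

theorem mem_simpleRootSimplex {v : E} :
    v ∈ simpleRootSimplex Δ ↔ (∀ i, 0 ≤ Δ.repr v i) ∧ l1 Δ v = 1 :=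
  Iff.rfl

theorem isCompact_simpleRootSimplex (Δ : Module.Basis I ℝ E) : IsCompact (simpleRootSimplex Δ) :=
  Δ.equivFunL.toHomeomorph.isCompact_preimage.mpr (isCompact_stdSimplex ℝ I)

theorem l1_pos {v : E} (hv : v ≠ 0) (hnonneg : ∀ i, 0 ≤ Δ.repr v i) : 0 < l1 Δ v := by
  refine (Finset.sum_nonneg fun i _ ↦ hnonneg i).lt_of_ne' fun hsum ↦ hv ?_
  refine Δ.ext_elem fun i ↦ ?_
  rw [map_zero, Finsupp.zero_apply]
  exact (Finset.sum_eq_zero_iff_of_nonneg fun i _ ↦ hnonneg i).mp hsum i (Finset.mem_univ i)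

theorem l1_smul_nrm {v : E} (hv : l1 Δ v ≠ 0) : l1 Δ v • nrm Δ v = v :=
  smul_inv_smul₀ hv v

theorem nrm_mem_simpleRootSimplex {v : E} (hv : 0 < l1 Δ v) (hnonneg : ∀ i, 0 ≤ Δ.repr v i) :
    nrm Δ v ∈ simpleRootSimplex Δ := by
  refine mem_simpleRootSimplex.mpr ⟨fun i ↦ ?_, ?_⟩
  · simpa [nrm] using mul_nonneg (inv_nonneg.mpr hv.le) (hnonneg i)
  · simp only [nrm, l1, map_smul, Finsupp.smul_apply, smul_eq_mul, ← Finset.mul_sum]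
    exact inv_mul_cancel₀ hv.ne'

theorem apply_nrm_nrm (B : LinearMap.BilinForm ℝ E) (v : E) :
    B (nrm Δ v) (nrm Δ v) = ((l1 Δ v) ^ 2)⁻¹ * B v v := by
  simp only [nrm, map_smul, LinearMap.smul_apply, smul_eq_mul]
  ring

theorem exists_pos_forall_le_abs_apply_self_of_le_dist_isoQ {N : Seminorm ℝ E} {ε : ℝ}
    (hε : 0 < ε) :
    ∃ δ > 0, ∀ v ∈ simpleRootSimplex Δ,
      (∀ y ∈ isoQ B ∩ {v | l1 Δ v = 1}, ε ≤ N (v - y)) → δ ≤ |B v v| := by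
  have := Δ.finiteDimensional_of_finite
  have hB : Continuous fun v ↦ |B v v| :=
    ((continuous_bilinForm_apply B).comp (continuous_id.prodMk continuous_id)).abs
  have hN := continuous_seminorm N
  have hclosed : IsClosed {v | ∀ y ∈ isoQ B ∩ {v | l1 Δ v = 1}, ε ≤ N (v - y)} := by
    simp only [Set.ofPred_forall]
    exact isClosed_biInter fun y _ ↦
      isClosed_le continuous_const (hN.comp (continuous_id.sub continuous_const))
  obtain ⟨δ, hδ, hle⟩ := ((isCompact_simpleRootSimplex Δ).inter_right hclosed).exists_forall_le'
    hB.continuousOn (a := 0) fun v hv ↦ abs_pos.mpr fun hv₀ ↦ by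
      have := hv.2 v ⟨hv₀, (mem_simpleRootSimplex.mp hv.1).2⟩
      rw [sub_self, map_zero] at this
      exact hε.not_ge this
  exact ⟨δ, hδ, fun v hv hdist ↦ hle v ⟨hv, hdist⟩⟩

theorem IsCoxeterForm.finite_setOf_mem_posPhi_le_dist_isoQ {M : CoxeterMatrix I}
    (h : IsCoxeterForm M B Δ) {N : Seminorm ℝ E} (hN : ∀ v, N v = 0 → v = 0) {ε : ℝ}
    (hε : 0 < ε) :
    {ρ ∈ posPhi B Δ | ∀ y ∈ isoQ B ∩ {v | l1 Δ v = 1}, ε ≤ N (nrm Δ ρ - y)}.Finite := by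
  have := Δ.finiteDimensional_of_finite
  obtain ⟨δ, hδ, hle⟩ :=
    exists_pos_forall_le_abs_apply_self_of_le_dist_isoQ (B := B) (Δ := Δ) (N := N) hε
  obtain ⟨C, hC⟩ := (isCompact_simpleRootSimplex Δ).bddAbove_image
    (continuous_seminorm N).continuousOn
  refine (h.finite_setOf_mem_Phi_seminorm_le hN (√δ⁻¹ * C)).subset ?_
  rintro ρ ⟨⟨hρ, hnonneg⟩, hdist⟩
  have hρρ := h.apply_self_of_mem_Phi hρ
  have hl1 : 0 < l1 Δ ρ := l1_pos (by rintro rfl; simp at hρρ) hnonneg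
  have hmem := nrm_mem_simpleRootSimplex hl1 hnonneg
  have hl1_le : l1 Δ ρ ≤ √δ⁻¹ := by
    have := hle _ hmem hdist
    rw [apply_nrm_nrm, hρρ, mul_one, abs_of_pos (by positivity)] at this
    exact Real.le_sqrt_of_sq_le (by rwa [le_inv_comm₀ (by positivity) hδ])
  refine ⟨hρ, ?_⟩
  calc N ρ = l1 Δ ρ * N (nrm Δ ρ) := by
        conv_lhs => rw [← l1_smul_nrm hl1.ne', map_smul_eq_mul, Real.norm_of_nonneg hl1.le]
    _ ≤ √δ⁻¹ * C := by
        gcongr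
        exact hC (Set.mem_image_of_mem _ hmem)

end NormalizedRoots

/-- For any norm on `V`: (i) for every `M ≥ 0` the set of roots of norm at most `M` is
finite; (ii) for every `ε > 0` the set of positive roots whose normalization is at
distance at least `ε` from `Q̂ = Q ∩ V₁` is finite. -/
theorem statement5 (B : LinearMap.BilinForm ℝ V) (Δ : Module.Basis ι ℝ V)
    (hsymm : ∀ u v : V, B u v = B v u)
    (hdiag : ∀ i : ι, B (Δ i) (Δ i) = 1)
    (hoff : ∀ i j : ι, i ≠ j → B (Δ i) (Δ j) ≤ -1 ∨
      ∃ k : ℕ, 2 ≤ k ∧ B (Δ i) (Δ j) = -Real.cos (Real.pi / (k : ℝ)))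
    (N : Seminorm ℝ V) (hN : ∀ v : V, N v = 0 → v = 0) :
    (∀ M : ℝ, 0 ≤ M → Set.Finite { ρ ∈ Phi B Δ | N ρ ≤ M }) ∧
    (∀ ε : ℝ, 0 < ε → Set.Finite
      { ρ ∈ posPhi B Δ | ∀ y ∈ isoQ B ∩ { v : V | l1 Δ v = 1 }, ε ≤ N (nrm Δ ρ - y) }) := by
  obtain ⟨M, h⟩ := exists_isCoxeterForm ⟨hsymm⟩ hdiag hoff
  exact ⟨fun r _ ↦ h.finite_setOf_mem_Phi_seminorm_le hN r,
    fun ε hε ↦ h.finite_setOf_mem_posPhi_le_dist_isoQ hN hε⟩
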